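/- Let n ≥ 1, let 0 < s ≤ t and let q₁, q₂ satisfy either 0 < q₂ ≤ q₁ < 1 or q₂ ≤ q₁ < 0, together with (q₂ − 1)/(q₁ − 1) = t/s. Then for every measurable function f : ℝ^n → ℝ with 0 < a ≤ f ≤ b for some constants a, b, and every x ∈ ℝ^n, ( P_t( f^{q₁} )(x) )^{1/q₁} ≤ ( P_s( (P_{t−s} f)^{q₂} )(x) )^{1/q₂}, where P_0 g = g (local reverse hypercontractivity of the heat semigroup under CD(0,∞)). -/

import Mathlib

open MeasureTheory Real

/-- Euclidean heat semigroup, with `heat n 0 f = f`. -/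
noncomputable def heat (n : ℕ) (t : ℝ) (f : EuclideanSpace ℝ (Fin n) → ℝ)
    (x : EuclideanSpace ℝ (Fin n)) : ℝ :=
  if t = 0 then f x
  else (4 * π * t) ^ (-(n : ℝ) / 2) * ∫ y, f y * Real.exp (-‖x - y‖ ^ 2 / (4 * t))

open ProbabilityTheory Filter Topology Set

/-- If `g 0 = 0` and `|g' x| ≤ K |x|^k` on an interval containing `0`, then
`|g x| ≤ K |x|^(k+1)` there. -/
lemma abs_le_mul_pow_succ_of_abs_deriv_le {g g' : ℝ → ℝ} {A B K : ℝ} {k : ℕ} (hK : 0 ≤ K)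
    (h0 : (0 : ℝ) ∈ Icc A B) (hg0 : g 0 = 0) (hg : ∀ x ∈ Icc A B, HasDerivAt g (g' x) x)
    (hb : ∀ x ∈ Icc A B, |g' x| ≤ K * |x| ^ k) :
    ∀ x ∈ Icc A B, |g x| ≤ K * |x| ^ (k + 1) := by
  intro x hx
  have hsub : uIcc 0 x ⊆ Icc A B := Set.ordConnected_Icc.uIcc_subset h0 hx
  have := (convex_uIcc (0 : ℝ) x).norm_image_sub_le_of_norm_hasDerivWithin_le
    (f := g) (f' := g') (C := K * |x| ^ k) (x := 0) (y := x)
    (fun y hy => (hg y (hsub hy)).hasDerivWithinAt)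
    (fun y hy => by
      refine (hb y (hsub hy)).trans ?_
      have : |y| ≤ |x| := by simpa using Set.abs_sub_left_of_mem_uIcc hy
      gcongr) left_mem_uIcc right_mem_uIcc
  simp only [hg0, sub_zero, Real.norm_eq_abs] at this
  calc |g x| ≤ K * |x| ^ k * |x| := this
    _ = K * |x| ^ (k + 1) := by ring

lemma hasDerivAt_one_add_rpow {x : ℝ} (hx : 0 < 1 + x) (α : ℝ) :
    HasDerivAt (fun y : ℝ => (1 + y) ^ α) (α * (1 + x) ^ (α - 1)) x := by
  have := ((hasDerivAt_id x).const_add 1).rpow_const (p := α) (Or.inl hx.ne')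
  simpa using this

lemma exists_abs_rpow_le {c : ℝ} (hc : 0 < c) (C α : ℝ) :
    ∃ K, 0 ≤ K ∧ ∀ x ∈ Icc c C, |x ^ α| ≤ K := by
  have hcont : ContinuousOn (fun x : ℝ => x ^ α) (Icc c C) := fun x hx =>
    (Real.continuousAt_rpow_const x α (Or.inl (hc.trans_le hx.1).ne')).continuousWithinAt
  obtain ⟨K, hK⟩ := isCompact_Icc.exists_bound_of_continuousOn hcont
  exact ⟨max K 0, le_max_right _ _, fun x hx => (hK x hx).trans (le_max_left _ _)⟩

lemma exists_one_add_rpow_le {A B : ℝ} (hA : -1 < A) (α : ℝ) :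
    ∃ K, 0 ≤ K ∧ ∀ x ∈ Icc A B, |(1 + x) ^ α| ≤ K := by
  obtain ⟨K, hK, h⟩ := exists_abs_rpow_le (c := 1 + A) (by linarith) (1 + B) α
  exact ⟨K, hK, fun x hx => h _ ⟨by linarith [hx.1], by linarith [hx.2]⟩⟩

/-- Second-order Taylor expansion of `(1 + x) ^ α` at `0`, uniformly on compact intervals. -/
lemma exists_one_add_rpow_taylor {A B : ℝ} (hA : -1 < A) (h0 : (0 : ℝ) ∈ Icc A B) (α : ℝ) :
    ∃ K, 0 ≤ K ∧ ∀ x ∈ Icc A B,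
      |(1 + x) ^ α - (1 + α * x + α * (α - 1) / 2 * x ^ 2)| ≤ K * |x| ^ 3 := by
  obtain ⟨K₀, hK₀, hb₀⟩ := exists_one_add_rpow_le (B := B) hA (α - 1 - 1 - 1)
  have hpos : ∀ x ∈ Icc A B, 0 < 1 + x := fun x hx => by linarith [hx.1]
  have hK : 0 ≤ |α * (α - 1) * (α - 1 - 1)| * K₀ := by positivity
  refine ⟨_, hK, ?_⟩
  have d1 := abs_le_mul_pow_succ_of_abs_deriv_le (k := 0)
    (g := fun x => α * (α - 1) * ((1 + x) ^ (α - 1 - 1) - 1))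
    (g' := fun x => α * (α - 1) * ((α - 1 - 1) * (1 + x) ^ (α - 1 - 1 - 1))) hK h0 (by simp)
    (fun x hx => ((hasDerivAt_one_add_rpow (hpos x hx) _).sub_const 1).const_mul _)
    (fun x hx => by
      rw [← mul_assoc, abs_mul, pow_zero, mul_one]
      exact mul_le_mul_of_nonneg_left (hb₀ x hx) (abs_nonneg _))
  have d2 := abs_le_mul_pow_succ_of_abs_deriv_le
    (g := fun x => α * ((1 + x) ^ (α - 1) - 1 - (α - 1) * x)) hK h0 (by simp)
    (fun x hx => by
      have := (((hasDerivAt_one_add_rpow (hpos x hx) (α - 1)).sub_const 1).sub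
        ((hasDerivAt_id x).const_mul (α - 1))).const_mul α
      convert! this using 1
      ring) d1
  exact abs_le_mul_pow_succ_of_abs_deriv_le
    (g := fun x => (1 + x) ^ α - (1 + α * x + α * (α - 1) / 2 * x ^ 2)) hK h0 (by simp)
    (fun x hx => by
      have := (hasDerivAt_one_add_rpow (hpos x hx) α).sub
        ((((hasDerivAt_id x).const_mul α).const_add 1).add
          ((hasDerivAt_pow 2 x).const_mul (α * (α - 1) / 2)))
      convert! this using 1
      push_cast
      ring) d2

/-- The second-order form of `(h, l) ↦ (1 + h) ^ α * (1 + l) ^ β` at the origin. -/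
noncomputable def rpowHessian (α β a b : ℝ) : ℝ :=
  α * (α - 1) / 2 * a ^ 2 + α * β * (a * b) + β * (β - 1) / 2 * b ^ 2

/-- Expansion of `(1 + h) ^ α * (1 + l) ^ β` when `h` and `l` are close to the small quantities
`ε a` and `ε b`. -/
lemma exists_rpow_mul_rpow_lower_bound {A B : ℝ} (hA : -1 < A) (h0 : (0 : ℝ) ∈ Icc A B)
    (α β M : ℝ) (hM : 0 ≤ M) :
    ∃ K, 0 ≤ K ∧ ∀ h ∈ Icc A B, ∀ l ∈ Icc A B, ∀ a b ε p : ℝ, 0 ≤ ε → 1 ≤ p →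
      |a| ≤ M * p → |b| ≤ M * p → |h - ε * a| ≤ M * ε ^ 2 * p → |l - ε * b| ≤ M * ε ^ 2 * p →
      ε ≤ 1 →
      1 + α * h + β * l + ε ^ 2 * rpowHessian α β a b - K * ε ^ 3 * p ^ 3
        ≤ (1 + h) ^ α * (1 + l) ^ β := by
  obtain ⟨K₁, hK₁, ht₁⟩ := exists_one_add_rpow_taylor hA h0 α
  obtain ⟨K₂, hK₂, ht₂⟩ := exists_one_add_rpow_taylor hA h0 β
  obtain ⟨K₃, hK₃, ht₃⟩ := exists_one_add_rpow_le (B := B) hA β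
  set D := max |A| |B|
  have hD : 0 ≤ D := le_max_of_le_left (abs_nonneg _)
  set α₂ := α * (α - 1) / 2 with hα₂
  set β₂ := β * (β - 1) / 2 with hβ₂
  set P := 1 + |α| * D + |α₂| * D ^ 2
  refine ⟨K₁ * (2 * M) ^ 3 * K₃ + P * (K₂ * (2 * M) ^ 3)
    + ((|α| * |β₂| + |α₂| * |β| + |α₂| * |β₂| * D) * (2 * M) ^ 3)
    + (|α₂| * (3 * M ^ 2) + |α * β| * (3 * M ^ 2) + |β₂| * (3 * M ^ 2)), by positivity, ?_⟩
  intro h hh l hl a b ε p hε hp ha hb hha hlb hε1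
  have hhD : |h| ≤ D := abs_le_max_abs_abs hh.1 hh.2
  have hp0 : 0 ≤ p := by linarith
  have small : ∀ {u c : ℝ}, |c| ≤ M * p → |u - ε * c| ≤ M * ε ^ 2 * p → |u| ≤ 2 * M * (ε * p) := by
    intro u c hc hu
    calc |u| = |(u - ε * c) + ε * c| := by ring_nf
      _ ≤ |u - ε * c| + |ε * c| := abs_add_le _ _
      _ ≤ M * ε ^ 2 * p + ε * (M * p) := by
        rw [abs_mul, abs_of_nonneg hε]
        gcongr
      _ ≤ M * ε * p + ε * (M * p) := by
        have : ε ^ 2 ≤ ε := by nlinarith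
        gcongr
      _ = _ := by ring
  have hhs := small ha hha
  have hls := small hb hlb
  have cube : (2 * M * (ε * p)) ^ 3 = (2 * M) ^ 3 * (ε ^ 3 * p ^ 3) := by ring
  have e3 : 0 ≤ ε ^ 3 * p ^ 3 := by positivity
  set X := (1 + h) ^ α
  set Y := (1 + l) ^ β
  set X₂ := 1 + α * h + α₂ * h ^ 2 with hX₂
  set Y₂ := 1 + β * l + β₂ * l ^ 2 with hY₂
  have hX : |X - X₂| ≤ K₁ * (2 * M) ^ 3 * (ε ^ 3 * p ^ 3) := by
    refine (ht₁ h hh).trans ?_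
    rw [mul_assoc, ← cube]
    gcongr
  have hY : |Y - Y₂| ≤ K₂ * (2 * M) ^ 3 * (ε ^ 3 * p ^ 3) := by
    refine (ht₂ l hl).trans ?_
    rw [mul_assoc, ← cube]
    gcongr
  have hP : |X₂| ≤ P := by
    refine (abs_add_three _ _ _).trans ?_
    rw [abs_one, abs_mul, abs_mul, abs_pow]
    change _ ≤ 1 + |α| * D + |α₂| * D ^ 2
    gcongr
  have t1 : |(X - X₂) * Y| ≤ K₁ * (2 * M) ^ 3 * (ε ^ 3 * p ^ 3) * K₃ := by
    rw [abs_mul]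
    exact mul_le_mul hX (ht₃ l hl) (abs_nonneg _) (by positivity)
  have t2 : |X₂ * (Y - Y₂)| ≤ P * (K₂ * (2 * M) ^ 3 * (ε ^ 3 * p ^ 3)) := by
    rw [abs_mul]
    exact mul_le_mul hP hY (abs_nonneg _) (by positivity)
  have t3 : |α * β₂ * (h * l ^ 2)| ≤ |α| * |β₂| * ((2 * M) ^ 3 * (ε ^ 3 * p ^ 3)) := by
    rw [abs_mul, abs_mul, abs_mul h, abs_pow, ← cube, pow_succ' _ 2]
    gcongr
  have t4 : |α₂ * β * (h ^ 2 * l)| ≤ |α₂| * |β| * ((2 * M) ^ 3 * (ε ^ 3 * p ^ 3)) := by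
    rw [abs_mul, abs_mul, abs_mul (h ^ 2), abs_pow, ← cube, pow_succ _ 2]
    gcongr
  have t5 : |α₂ * β₂ * (h * (h * l ^ 2))|
      ≤ |α₂| * |β₂| * (D * ((2 * M) ^ 3 * (ε ^ 3 * p ^ 3))) := by
    rw [abs_mul, abs_mul, abs_mul h, abs_mul h, abs_pow, ← cube, pow_succ' _ 2]
    gcongr
  have mixed : ∀ {u c v d : ℝ}, |c| ≤ M * p → |u - ε * c| ≤ M * ε ^ 2 * p → |d| ≤ M * p →
      |v - ε * d| ≤ M * ε ^ 2 * p → |u * v - ε ^ 2 * (c * d)| ≤ 3 * M ^ 2 * (ε ^ 3 * p ^ 3) := by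
    intro u c v d hc hu hd hv
    calc |u * v - ε ^ 2 * (c * d)| = |(u - ε * c) * v + (ε * c) * (v - ε * d)| := by ring_nf
      _ ≤ |u - ε * c| * |v| + |ε * c| * |v - ε * d| := by
        rw [← abs_mul, ← abs_mul]
        exact abs_add_le _ _
      _ ≤ (M * ε ^ 2 * p) * (2 * M * (ε * p)) + (ε * (M * p)) * (M * ε ^ 2 * p) := by
        rw [abs_mul ε, abs_of_nonneg hε]
        have := small hd hv
        gcongr
      _ = 3 * M ^ 2 * (ε ^ 3 * p ^ 2) := by ring
      _ ≤ _ := by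
        have : p ^ 2 ≤ p ^ 3 := pow_le_pow_right₀ hp (by norm_num)
        gcongr
  have scale : ∀ {γ u w : ℝ}, |u| ≤ w → |γ * u| ≤ |γ| * w := by
    intro γ u w hu
    rw [abs_mul]
    gcongr
  have t6 := scale (γ := α₂) (mixed ha hha ha hha)
  have t7 := scale (γ := α * β) (mixed ha hha hb hlb)
  have t8 := scale (γ := β₂) (mixed hb hlb hb hlb)
  have key : X * Y = 1 + α * h + β * l + ε ^ 2 * rpowHessian α β a b
      + (X - X₂) * Y + X₂ * (Y - Y₂) + α * β₂ * (h * l ^ 2) + α₂ * β * (h ^ 2 * l)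
      + α₂ * β₂ * (h * (h * l ^ 2)) + α₂ * (h * h - ε ^ 2 * (a * a))
      + α * β * (h * l - ε ^ 2 * (a * b)) + β₂ * (l * l - ε ^ 2 * (b * b)) := by
    rw [rpowHessian, hX₂, hY₂, ← hα₂, ← hβ₂]
    ring
  rw [key]
  have := neg_le_of_abs_le t1
  have := neg_le_of_abs_le t2
  have := neg_le_of_abs_le t3
  have := neg_le_of_abs_le t4
  have := neg_le_of_abs_le t5
  have := neg_le_of_abs_le t6
  have := neg_le_of_abs_le t7
  have := neg_le_of_abs_le t8
  linarith

section Flow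

variable {E : Type*} [NormedAddCommGroup E] [NormedSpace ℝ E]

/-- Functions with values in `[c, C]` that admit a first-order expansion with derivative bounded by
`M` and remainder at most `M ‖h‖ ^ 2`, uniformly in the base point. -/
structure IsTame (c C M : ℝ) (F : E → ℝ) : Prop where
  mem_Icc : ∀ y, F y ∈ Icc c C
  exists_expansion : ∃ F' : E → E →L[ℝ] ℝ, ∀ y, ‖F' y‖ ≤ M ∧
    ∀ h, |F (y + h) - F y - F' y h| ≤ M * ‖h‖ ^ 2

lemma hasFDerivAt_of_abs_sub_le_sq {F : E → ℝ} {L : E →L[ℝ] ℝ} {M : ℝ} {y : E}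
    (h : ∀ h, |F (y + h) - F y - L h| ≤ M * ‖h‖ ^ 2) : HasFDerivAt F L y := by
  rw [hasFDerivAt_iff_isLittleO_nhds_zero]
  have h1 : (fun h => F (y + h) - F y - L h) =O[𝓝 0] fun h : E => ‖h‖ ^ 2 :=
    Asymptotics.IsBigO.of_bound M (Eventually.of_forall fun z => by simpa using h z)
  exact h1.trans_isLittleO (Asymptotics.isLittleO_norm_pow_id one_lt_two)

lemma IsTame.continuous {c C M : ℝ} {F : E → ℝ} (hF : IsTame c C M F) : Continuous F := by
  obtain ⟨F', hF'⟩ := hF.exists_expansion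
  exact continuous_iff_continuousAt.2 fun y =>
    (hasFDerivAt_of_abs_sub_le_sq (hF' y).2).continuousAt

lemma IsTame.mono {c C M M' : ℝ} {F : E → ℝ} (hF : IsTame c C M F) (h : M ≤ M') :
    IsTame c C M' F := by
  obtain ⟨F', hF'⟩ := hF.exists_expansion
  exact ⟨hF.mem_Icc, F', fun y => ⟨(hF' y).1.trans h, fun z => ((hF' y).2 z).trans (by gcongr)⟩⟩

lemma exists_isTame_const_add {g : E → ℝ} (hg : ContDiff ℝ 2 g) (hgc : HasCompactSupport g)
    {c C d : ℝ} (hmem : ∀ y, d + g y ∈ Icc c C) :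
    ∃ M, 0 ≤ M ∧ IsTame c C M fun y => d + g y := by
  have hg' : ContDiff ℝ 1 (fderiv ℝ g) := hg.fderiv_right (by norm_num)
  obtain ⟨K, hK⟩ := (hgc.fderiv ℝ).exists_bound_of_continuous hg'.continuous
  obtain ⟨D, hD⟩ := hg'.lipschitzWith_of_hasCompactSupport (hgc.fderiv ℝ) one_ne_zero
  have hdiff : Differentiable ℝ g := hg.differentiable two_ne_zero
  refine ⟨max K D, le_max_of_le_right D.2, hmem, fderiv ℝ g,
    fun y => ⟨(hK y).trans (le_max_left _ _), fun h => ?_⟩⟩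
  have hmv := (convex_segment y (y + h)).norm_image_sub_le_of_norm_hasFDerivWithin_le
    (f := fun z => g z - fderiv ℝ g y z) (f' := fun z => fderiv ℝ g z - fderiv ℝ g y)
    (C := D * ‖h‖)
    (fun z _ => ((hdiff z).hasFDerivAt.sub (fderiv ℝ g y).hasFDerivAt).hasFDerivWithinAt)
    (fun z hz => by
      refine (hD.norm_sub_le z y).trans ?_
      gcongr
      simpa using norm_sub_le_of_mem_segment hz)
    (left_mem_segment ℝ _ _) (right_mem_segment ℝ _ _)
  simp only [map_add, add_sub_cancel_left, Real.norm_eq_abs] at hmv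
  calc |d + g (y + h) - (d + g y) - fderiv ℝ g y h|
      = |g (y + h) - (fderiv ℝ g y y + fderiv ℝ g y h) - (g y - fderiv ℝ g y y)| := by
        congr 1
        ring
    _ ≤ D * ‖h‖ * ‖h‖ := hmv
    _ = D * ‖h‖ ^ 2 := by ring
    _ ≤ max K D * ‖h‖ ^ 2 := by
      gcongr
      exact le_max_right _ _

lemma integrable_of_mem_Icc {Ω : Type*} [MeasurableSpace Ω] {μ : Measure Ω}
    [IsProbabilityMeasure μ] {g : Ω → ℝ} {c C : ℝ} (hg : Measurable g) (h : ∀ w, g w ∈ Icc c C) :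
    Integrable g μ :=
  Integrable.of_mem_Icc c C hg.aemeasurable (ae_of_all _ h)

lemma integral_mem_Icc_of_mem_Icc {Ω : Type*} [MeasurableSpace Ω] {μ : Measure Ω}
    [IsProbabilityMeasure μ] {g : Ω → ℝ} {c C : ℝ} (hg : Measurable g) (h : ∀ w, g w ∈ Icc c C) :
    ∫ w, g w ∂μ ∈ Icc c C := by
  have hi := integrable_of_mem_Icc (μ := μ) hg h
  constructor
  · simpa using integral_mono (integrable_const c) hi fun w => (h w).1
  · simpa using integral_mono hi (integrable_const C) fun w => (h w).2

lemma integrable_rpow_mul_rpow {Ω : Type*} [MeasurableSpace Ω] {μ : Measure Ω}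
    [IsProbabilityMeasure μ] {g k : Ω → ℝ} {c C : ℝ} (hc : 0 < c) (α β : ℝ) (hg : Measurable g)
    (hk : Measurable k) (hgb : ∀ w, g w ∈ Icc c C) (hkb : ∀ w, k w ∈ Icc c C) :
    Integrable (fun w => g w ^ α * k w ^ β) μ := by
  obtain ⟨K₁, hK₁, h₁⟩ := exists_abs_rpow_le hc C α
  obtain ⟨K₂, hK₂, h₂⟩ := exists_abs_rpow_le hc C β
  refine Integrable.of_bound (C := K₁ * K₂) (by fun_prop) (ae_of_all _ fun w => ?_)
  rw [Real.norm_eq_abs, abs_mul]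
  exact mul_le_mul (h₁ _ (hgb w)) (h₂ _ (hkb w)) (abs_nonneg _) hK₁

variable [FiniteDimensional ℝ E]

/-- The average of a tame function over translates is close to its first-order expansion. -/
lemma abs_sub_average_sub_le {Ω : Type*} [MeasurableSpace Ω] {μ : Measure Ω}
    [IsProbabilityMeasure μ] {X : Ω → E} (hX2 : MemLp X 2 μ)
    (hX0 : ∫ w, X w ∂μ = 0) {F : E → ℝ} (hF : Integrable (fun w => F (X w)) μ) {u M : ℝ}
    {L : E →L[ℝ] ℝ} (h : ∀ x, |F x - u - L x| ≤ M * ‖x‖ ^ 2) (w : Ω) :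
    |F (X w) - ∫ w, F (X w) ∂μ - L (X w)| ≤ M * (‖X w‖ ^ 2 + ∫ w, ‖X w‖ ^ 2 ∂μ) := by
  have hXi : Integrable X μ := hX2.integrable one_le_two
  have hL : Integrable (fun w => L (X w)) μ := L.integrable_comp hXi
  have hL0 : ∫ w, L (X w) ∂μ = 0 := by rw [L.integral_comp_comm hXi, hX0, map_zero]
  have hsq : Integrable (fun w => ‖X w‖ ^ 2) μ := hX2.integrable_norm_pow two_ne_zero
  have e : ∫ w, (F (X w) - u - L (X w)) ∂μ = ∫ w, F (X w) ∂μ - u := by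
    have h1 := integral_sub (hF.sub (integrable_const u)) hL
    have h2 := integral_sub hF (integrable_const (μ := μ) u)
    simp only [Pi.sub_apply] at h1
    rw [h1, h2, hL0]
    simp
  have hb : |∫ w, F (X w) ∂μ - u| ≤ M * ∫ w, ‖X w‖ ^ 2 ∂μ := by
    rw [← e, ← integral_const_mul]
    exact norm_integral_le_of_norm_le (f := fun w => F (X w) - u - L (X w)) (hsq.const_mul M)
      (ae_of_all _ fun w => h (X w))
  have := h (X w)
  rw [abs_le] at *
  constructor <;> linarith

variable [MeasurableSpace E] [BorelSpace E]

/-- Averaging a tame function over small centered translates: relative deviation from the mean,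
compared to its linear part. -/
lemma IsTame.exists_linear_approx {Ω : Type*} [MeasurableSpace Ω] {μ : Measure Ω}
    [IsProbabilityMeasure μ] {X : Ω → E} (hX : Measurable X) (hX2 : MemLp X 2 μ)
    (hX0 : ∫ w, X w ∂μ = 0) {c C M : ℝ} (hc : 0 < c) (hM : 0 ≤ M) {F : E → ℝ}
    (hF : IsTame c C M F) {p : Ω → ℝ} (hp : ∀ w, 1 + ‖X w‖ ^ 2 + ∫ w, ‖X w‖ ^ 2 ∂μ ≤ p w)
    {ε : ℝ} (y : E) :
    ∃ m ∈ Icc c C, ∃ h : Ω → ℝ, ∃ a : E →L[ℝ] ℝ,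
      m = ∫ w, F (y + ε • X w) ∂μ ∧ Integrable h μ ∧ ∫ w, h w ∂μ = 0 ∧
      ∀ w, F (y + ε • X w) = m * (1 + h w) ∧ h w ∈ Icc (c / C - 1) (C / c - 1) ∧
        |a (X w)| ≤ M / c * p w ∧ |h w - ε * a (X w)| ≤ M / c * ε ^ 2 * p w := by
  obtain ⟨F', hF'⟩ := hF.exists_expansion
  have hmeas : Measurable fun w => F (y + ε • X w) := by
    have := hF.continuous.measurable
    fun_prop
  have hint := integrable_of_mem_Icc (μ := μ) hmeas fun w => hF.mem_Icc _
  have hm := integral_mem_Icc_of_mem_Icc (μ := μ) hmeas fun w => hF.mem_Icc _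
  set m := ∫ w, F (y + ε • X w) ∂μ with hmdef
  have hm0 : 0 < m := hc.trans_le hm.1
  have hS : 0 ≤ ∫ w, ‖X w‖ ^ 2 ∂μ := integral_nonneg fun w => by positivity
  refine ⟨m, hm, fun w => F (y + ε • X w) / m - 1, m⁻¹ • F' y, rfl,
    (hint.div_const m).sub (integrable_const 1), ?_, fun w => ⟨?_, ⟨?_, ?_⟩, ?_, ?_⟩⟩
  · rw [integral_sub (hint.div_const m) (integrable_const 1), integral_div, ← hmdef]
    simp [hm0.ne']
  · field_simp
    ring
  · have h1 := hF.mem_Icc (y + ε • X w)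
    have : c / C ≤ F (y + ε • X w) / m := div_le_div₀ (hc.le.trans h1.1) h1.1 hm0 hm.2
    linarith
  · have h1 := hF.mem_Icc (y + ε • X w)
    have : F (y + ε • X w) / m ≤ C / c :=
      div_le_div₀ (hc.le.trans (h1.1.trans h1.2)) h1.2 hc hm.1
    linarith
  · have h1 : |F' y (X w)| ≤ M * p w := by
      calc |F' y (X w)| ≤ ‖F' y‖ * ‖X w‖ := (F' y).le_opNorm _
        _ ≤ M * p w := by
          have : ‖X w‖ ≤ p w := by nlinarith [hp w, sq_nonneg (‖X w‖ - 1)]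
          have := (hF' y).1
          gcongr
    calc |(m⁻¹ • F' y) (X w)| = |F' y (X w)| / m := by
          rw [smul_apply, smul_eq_mul, abs_mul, abs_of_pos (inv_pos.2 hm0)]
          ring
      _ ≤ M * p w / c := div_le_div₀ ((abs_nonneg _).trans h1) h1 hc hm.1
      _ = M / c * p w := by ring
  · have h0 : ∫ w, ε • X w ∂μ = 0 := by rw [integral_smul, hX0, smul_zero]
    have h1 := abs_sub_average_sub_le (F := fun z => F (y + z)) (hX2.const_smul ε) h0 hint
      (hF' y).2 w
    simp only [Pi.smul_apply, norm_smul, mul_pow, integral_const_mul, Real.norm_eq_abs,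
      sq_abs, ← hmdef] at h1
    have h2 : |F (y + ε • X w) - m - F' y (ε • X w)| ≤ M * ε ^ 2 * p w := by
      refine h1.trans ?_
      rw [← mul_add, mul_assoc]
      gcongr
      linarith [hp w]
    calc |F (y + ε • X w) / m - 1 - ε * (m⁻¹ • F' y) (X w)|
        = |F (y + ε • X w) - m - F' y (ε • X w)| / m := by
          rw [← abs_of_pos hm0, ← abs_div, abs_of_pos hm0]
          congr 1
          simp only [smul_apply, smul_eq_mul, map_smul]
          field_simp
      _ ≤ M * ε ^ 2 * p w / c := div_le_div₀ ((abs_nonneg _).trans h2) h2 hc hm.1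
      _ = M / c * ε ^ 2 * p w := by ring

lemma integrable_const_add_norm_sq_pow_three {V : Type*} [NormedAddCommGroup V] [NormedSpace ℝ V]
    [CompleteSpace V] [SecondCountableTopology V] [MeasurableSpace V] [BorelSpace V]
    (ν : Measure V) [IsGaussian ν] (a : ℝ) : Integrable (fun w => (a + ‖w‖ ^ 2) ^ 3) ν := by
  have hk : ∀ k : ℕ, Integrable (fun w : V => ‖w‖ ^ k) ν := fun k =>
    (IsGaussian.memLp_id ν k (by simp)).integrable_norm_pow'
  have := (((integrable_const (a ^ 3)).add ((hk 2).const_mul (3 * a ^ 2))).add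
    ((hk 4).const_mul (3 * a))).add (hk 6)
  refine this.congr (ae_of_all _ fun w => ?_)
  simp only [Pi.add_apply]
  ring

lemma exists_one_step (ν : Measure (E × E)) [IsGaussian ν] (hν : ∫ w, w ∂ν = 0)
    {α β c C M : ℝ} (hc : 0 < c) (hcC : c ≤ C) (hM : 0 ≤ M)
    (hQ : ∀ a b : E →L[ℝ] ℝ, 0 ≤ ∫ w, rpowHessian α β (a w.1) (b w.2) ∂ν) :
    ∃ K, 0 ≤ K ∧ ∀ F G : E → ℝ, IsTame c C M F → IsTame c C M G →
      ∀ ε : ℝ, 0 ≤ ε → ε ≤ 1 → ∀ y x : E,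
      (∫ w, F (y + ε • w.1) ∂ν) ^ α * (∫ w, G (x + ε • w.2) ∂ν) ^ β - K * ε ^ 3
        ≤ ∫ w, F (y + ε • w.1) ^ α * G (x + ε • w.2) ^ β ∂ν := by
  have hC : 0 < C := hc.trans_le hcC
  obtain ⟨K, hK, hKb⟩ := exists_rpow_mul_rpow_lower_bound (A := c / C - 1) (B := C / c - 1)
    (by linarith [div_pos hc hC])
    ⟨by linarith [(div_le_one hC).2 hcC], by linarith [(one_le_div hc).2 hcC]⟩
    α β (M / c) (by positivity)
  obtain ⟨K₁, hK₁, hb₁⟩ := exists_abs_rpow_le hc C α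
  obtain ⟨K₂, hK₂, hb₂⟩ := exists_abs_rpow_le hc C β
  have hL2 : MemLp (fun w : E × E => w) 2 ν := IsGaussian.memLp_two_id
  have hwi : Integrable (fun w : E × E => w) ν := hL2.integrable one_le_two
  have h1L2 : MemLp (fun w : E × E => w.1) 2 ν := hL2.fst
  have h2L2 : MemLp (fun w : E × E => w.2) 2 ν := hL2.snd
  have h10 : ∫ w, w.1 ∂ν = 0 := by rw [← fst_integral hwi, hν]; rfl
  have h20 : ∫ w, w.2 ∂ν = 0 := by rw [← snd_integral hwi, hν]; rfl
  have hsq : Integrable (fun w : E × E => ‖w‖ ^ 2) ν := hL2.integrable_norm_pow two_ne_zero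
  set S := ∫ w, ‖w‖ ^ 2 ∂ν
  have hS : 0 ≤ S := integral_nonneg fun w => by positivity
  set p : E × E → ℝ := fun w => (1 + S) + ‖w‖ ^ 2 with hp
  have hp1 : ∀ w, 1 ≤ p w := fun w => by simp only [hp]; nlinarith [sq_nonneg ‖w‖]
  have hp3 : Integrable (fun w => p w ^ 3) ν := integrable_const_add_norm_sq_pow_three ν _
  have hle1 : ∀ w : E × E, ‖w.1‖ ^ 2 ≤ ‖w‖ ^ 2 := fun w => by gcongr; exact norm_fst_le w
  have hle2 : ∀ w : E × E, ‖w.2‖ ^ 2 ≤ ‖w‖ ^ 2 := fun w => by gcongr; exact norm_snd_le w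
  have hpa : ∀ w : E × E, 1 + ‖w.1‖ ^ 2 + ∫ w, ‖w.1‖ ^ 2 ∂ν ≤ p w := fun w => by
    have := integral_mono (h1L2.integrable_norm_pow two_ne_zero) hsq hle1
    simp only [hp]
    linarith [hle1 w]
  have hpb : ∀ w : E × E, 1 + ‖w.2‖ ^ 2 + ∫ w, ‖w.2‖ ^ 2 ∂ν ≤ p w := fun w => by
    have := integral_mono (h2L2.integrable_norm_pow two_ne_zero) hsq hle2
    simp only [hp]
    linarith [hle2 w]
  have hT : 0 ≤ ∫ w, p w ^ 3 ∂ν := integral_nonneg fun w => pow_nonneg (zero_le_one.trans (hp1 w)) 3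
  refine ⟨K₁ * K₂ * (K * ∫ w, p w ^ 3 ∂ν), by positivity, ?_⟩
  intro F G hF hG ε hε hε1 y x
  obtain ⟨m, hm, h, a, hm_eq, hhi, hh0, hh⟩ :=
    hF.exists_linear_approx measurable_fst h1L2 h10 hc hM hpa (ε := ε) y
  obtain ⟨k, hk, l, b, hk_eq, hli, hl0, hl⟩ :=
    hG.exists_linear_approx measurable_snd h2L2 h20 hc hM hpb (ε := ε) x
  rw [← hm_eq, ← hk_eq]
  have hm0 : 0 < m := hc.trans_le hm.1
  have hk0 : 0 < k := hc.trans_le hk.1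
  have hQi : Integrable (fun w : E × E => rpowHessian α β (a w.1) (b w.2)) ν := by
    have ha2 : MemLp (fun w : E × E => a w.1) 2 ν := a.comp_memLp' h1L2
    have hb2 : MemLp (fun w : E × E => b w.2) 2 ν := b.comp_memLp' h2L2
    exact ((ha2.integrable_sq.const_mul _).add ((ha2.integrable_mul hb2).const_mul _)).add
      (hb2.integrable_sq.const_mul _)
  have hlow : Integrable (fun w => 1 + α * h w + β * l w
      + ε ^ 2 * rpowHessian α β (a w.1) (b w.2) - K * ε ^ 3 * p w ^ 3) ν :=
    ((((integrable_const 1).add (hhi.const_mul α)).add (hli.const_mul β)).add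
      (hQi.const_mul _)).sub (hp3.const_mul _)
  have hlow_eq : ∫ w, (1 + α * h w + β * l w
      + ε ^ 2 * rpowHessian α β (a w.1) (b w.2) - K * ε ^ 3 * p w ^ 3) ∂ν
      = 1 + ε ^ 2 * (∫ w, rpowHessian α β (a w.1) (b w.2) ∂ν) - K * ε ^ 3 * ∫ w, p w ^ 3 ∂ν := by
    rw [integral_sub (by fun_prop) (by fun_prop), integral_add (by fun_prop) (by fun_prop),
      integral_add (by fun_prop) (by fun_prop), integral_add (by fun_prop) (by fun_prop)]
    simp [integral_const_mul, hh0, hl0]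
  have hfac : ∀ w : E × E, F (y + ε • w.1) ^ α * G (x + ε • w.2) ^ β
      = m ^ α * k ^ β * ((1 + h w) ^ α * (1 + l w) ^ β) := by
    intro w
    have hA : -1 < c / C - 1 := by linarith [div_pos hc hC]
    have e1 : 0 ≤ 1 + h w := by linarith [(hh w).2.1.1]
    have e2 : 0 ≤ 1 + l w := by linarith [(hl w).2.1.1]
    rw [(hh w).1, (hl w).1, mul_rpow hm0.le e1, mul_rpow hk0.le e2]
    ring
  have hint : Integrable (fun w : E × E => F (y + ε • w.1) ^ α * G (x + ε • w.2) ^ β) ν := by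
    have := hF.continuous.measurable
    have := hG.continuous.measurable
    exact integrable_rpow_mul_rpow hc α β (by fun_prop) (by fun_prop)
      (fun w => hF.mem_Icc _) (fun w => hG.mem_Icc _)
  have hmono := integral_mono (hlow.const_mul (m ^ α * k ^ β)) hint fun w => by
    rw [hfac]
    refine mul_le_mul_of_nonneg_left ?_ (by positivity)
    exact hKb (h w) (hh w).2.1 (l w) (hl w).2.1 _ _ ε (p w) hε (hp1 w) (hh w).2.2.1
      (hl w).2.2.1 (hh w).2.2.2 (hl w).2.2.2 hε1
  rw [integral_const_mul, hlow_eq] at hmono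
  refine le_trans ?_ hmono
  have hmk : m ^ α * k ^ β ≤ K₁ * K₂ :=
    mul_le_mul ((le_abs_self _).trans (hb₁ m hm)) ((le_abs_self _).trans (hb₂ k hk))
      (by positivity) hK₁
  have hmk0 : 0 ≤ m ^ α * k ^ β := by positivity
  have h1 := mul_nonneg hmk0 (mul_nonneg (sq_nonneg ε) (hQ a b))
  have h2 : m ^ α * k ^ β * (K * ε ^ 3 * ∫ w, p w ^ 3 ∂ν)
      ≤ K₁ * K₂ * (K * ε ^ 3 * ∫ w, p w ^ 3 ∂ν) := by gcongr
  linarith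

/-- Averages of tame functions over translates are tame, with the same constants. -/
lemma IsTame.average {Ω : Type*} [MeasurableSpace Ω] {μ : Measure Ω}
    [IsProbabilityMeasure μ] {X : Ω → E} (hX : Measurable X) {c C M : ℝ} {F : E → ℝ}
    (hF : IsTame c C M F) : IsTame c C M fun y => ∫ w, F (y + X w) ∂μ := by
  have hFm : Measurable F := hF.continuous.measurable
  have hmeas : ∀ y, Measurable fun w => F (y + X w) := fun y => by fun_prop
  have hint : ∀ y, Integrable (fun w => F (y + X w)) μ := fun y =>
    integrable_of_mem_Icc (hmeas y) fun w => hF.mem_Icc _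
  refine ⟨fun y => integral_mem_Icc_of_mem_Icc (hmeas y) fun w => hF.mem_Icc _, ?_⟩
  obtain ⟨F', hF'⟩ := hF.exists_expansion
  have hF'eq : F' = fderiv ℝ F := funext fun y =>
    (hasFDerivAt_of_abs_sub_le_sq (hF' y).2).fderiv.symm
  have hF'm : Measurable F' := hF'eq ▸ measurable_fderiv ℝ F
  have hint' : ∀ y, Integrable (fun w => F' (y + X w)) μ := fun y =>
    Integrable.of_bound (C := M) (hF'm.comp (hX.const_add y)).aestronglyMeasurable
      (ae_of_all _ fun w => (hF' _).1)
  refine ⟨fun y => ∫ w, F' (y + X w) ∂μ, fun y => ⟨?_, fun h => ?_⟩⟩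
  · simpa using norm_integral_le_of_norm_le_const (μ := μ)
      (ae_of_all _ fun w => (hF' (y + X w)).1)
  · have hi1 : Integrable (fun w => F (y + h + X w) - F (y + X w)) μ := (hint _).sub (hint _)
    rw [ContinuousLinearMap.integral_apply (hint' y), ← integral_sub (hint _) (hint _),
      ← integral_sub hi1 ((hint' y).apply_continuousLinearMap h)]
    have := norm_integral_le_of_norm_le_const (μ := μ)
      (f := fun w => F (y + h + X w) - F (y + X w) - F' (y + X w) h) (C := M * ‖h‖ ^ 2)
      (ae_of_all _ fun w => by
        rw [add_right_comm]
        exact (hF' (y + X w)).2 h)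
    simpa using this

/-- Independent scaled copies of a centered Gaussian vector add up to a scaled copy. -/
lemma integral_integral_smul_add_smul {V : Type*} [NormedAddCommGroup V] [NormedSpace ℝ V]
    [CompleteSpace V] [SecondCountableTopology V] [MeasurableSpace V] [BorelSpace V]
    {ν : Measure V} [IsGaussian ν] (hν : ∫ w, w ∂ν = 0) {H : V → ℝ} (hH : Measurable H) {B : ℝ}
    (hB : ∀ v, |H v| ≤ B) (r₁ r₂ : ℝ) :
    ∫ w, ∫ z, H (r₁ • w + r₂ • z) ∂ν ∂ν = ∫ w, H (√(r₁ ^ 2 + r₂ ^ 2) • w) ∂ν := by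
  set ζ : ℂ := ⟨r₁, r₂⟩
  set r := √(r₁ ^ 2 + r₂ ^ 2)
  have hr : r = ‖ζ‖ := by rw [Complex.norm_eq_sqrt_sq_add_sq]
  have h1 : r₁ = r * Real.cos ζ.arg := by rw [hr, Complex.norm_mul_cos_arg]
  have h2 : r₂ = r * Real.sin ζ.arg := by rw [hr, Complex.norm_mul_sin_arg]
  have hint : Integrable (fun v : V × V => H (r₁ • v.1 + r₂ • v.2)) (ν.prod ν) :=
    Integrable.of_bound (C := B) (Measurable.aestronglyMeasurable (by fun_prop))
      (ae_of_all _ fun v => hB _)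
  rw [← integral_prod (fun v : V × V => H (r₁ • v.1 + r₂ • v.2)) hint]
  have hrot := IsGaussian.map_rotation_eq_self (μ := ν) hν ζ.arg
  have h3 : ∫ v, H (r • v.1) ∂(ν.prod ν) = ∫ w, H (r • w) ∂ν := by
    simpa using integral_fun_fst (μ := ν) (ν := ν) fun w => H (r • w)
  rw [← h3]
  conv_rhs => rw [← hrot]
  rw [integral_map (by fun_prop) (Measurable.aestronglyMeasurable (by fun_prop))]
  refine integral_congr_ae (ae_of_all _ fun v => ?_)
  simp only [ContinuousLinearMap.rotation_apply, smul_add, smul_smul, ← h1, ← h2]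

/-- Iterating the one-step estimate along the Gaussian semigroup. -/
lemma rpow_mul_rpow_average_le_add {ν : Measure (E × E)} [IsGaussian ν] (hν : ∫ w, w ∂ν = 0)
    {α β c C M : ℝ} (hc : 0 < c) {K ε : ℝ}
    (hstep : ∀ F G : E → ℝ, IsTame c C M F → IsTame c C M G → ∀ y x : E,
      (∫ w, F (y + ε • w.1) ∂ν) ^ α * (∫ w, G (x + ε • w.2) ∂ν) ^ β - K
        ≤ ∫ w, F (y + ε • w.1) ^ α * G (x + ε • w.2) ^ β ∂ν)
    {F G : E → ℝ} (hF : IsTame c C M F) (hG : IsTame c C M G) (k : ℕ) (y x : E) :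
    (∫ w, F (y + √(k * ε ^ 2) • w.1) ∂ν) ^ α * (∫ w, G (x + √(k * ε ^ 2) • w.2) ∂ν) ^ β - k * K
      ≤ ∫ w, F (y + √(k * ε ^ 2) • w.1) ^ α * G (x + √(k * ε ^ 2) • w.2) ^ β ∂ν := by
  have hFm : Measurable F := hF.continuous.measurable
  have hGm : Measurable G := hG.continuous.measurable
  induction k generalizing y x with
  | zero => simp
  | succ k ih =>
    set r := √(k * ε ^ 2)
    have hr : √(((k + 1 : ℕ) : ℝ) * ε ^ 2) = √(ε ^ 2 + r ^ 2) := by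
      rw [Real.sq_sqrt (by positivity)]
      push_cast
      ring_nf
    obtain ⟨K₁, hK₁, hb₁⟩ := exists_abs_rpow_le hc C α
    obtain ⟨K₂, hK₂, hb₂⟩ := exists_abs_rpow_le hc C β
    have habs : ∀ {u : ℝ}, u ∈ Icc c C → |u| ≤ C := fun hu => by
      rw [abs_of_pos (hc.trans_le hu.1)]
      exact hu.2
    have eF := integral_integral_smul_add_smul hν (H := fun v : E × E => F (y + v.1))
      (by fun_prop) (fun v => habs (hF.mem_Icc _)) ε r
    have eG := integral_integral_smul_add_smul hν (H := fun v : E × E => G (x + v.2))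
      (by fun_prop) (fun v => habs (hG.mem_Icc _)) ε r
    have eJ := integral_integral_smul_add_smul hν
      (H := fun v : E × E => F (y + v.1) ^ α * G (x + v.2) ^ β) (B := K₁ * K₂)
      (by fun_prop) (fun v => by
        rw [abs_mul]
        exact mul_le_mul (hb₁ _ (hF.mem_Icc _)) (hb₂ _ (hG.mem_Icc _)) (abs_nonneg _) hK₁) ε r
    simp only [Prod.fst_add, Prod.snd_add, Prod.smul_fst, Prod.smul_snd, ← hr, ← add_assoc]
      at eF eG eJ
    rw [← eF, ← eG, ← eJ]
    have hFr : IsTame c C M fun y => ∫ w, F (y + r • w.1) ∂ν :=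
      hF.average (measurable_fst.const_smul r)
    have hGr : IsTame c C M fun x => ∫ w, G (x + r • w.2) ∂ν :=
      hG.average (measurable_snd.const_smul r)
    have hFrm := hFr.continuous.measurable
    have hGrm := hGr.continuous.measurable
    have h1 := hstep _ _ hFr hGr y x
    have hi1 : Integrable (fun w : E × E => (∫ z, F (y + ε • w.1 + r • z.1) ∂ν) ^ α
        * (∫ z, G (x + ε • w.2 + r • z.2) ∂ν) ^ β) ν :=
      integrable_rpow_mul_rpow hc α β (hFrm.comp (by fun_prop)) (hGrm.comp (by fun_prop))
        (fun w => hFr.mem_Icc _) (fun w => hGr.mem_Icc _)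
    have hi2 : Integrable (fun w : E × E => ∫ z, F (y + ε • w.1 + r • z.1) ^ α
        * G (x + ε • w.2 + r • z.2) ^ β ∂ν) ν := by
      have : Integrable (fun v : (E × E) × (E × E) => F (y + ε • v.1.1 + r • v.2.1) ^ α
        * G (x + ε • v.1.2 + r • v.2.2) ^ β) (ν.prod ν) :=
        integrable_rpow_mul_rpow hc α β (by fun_prop) (by fun_prop)
          (fun w => hF.mem_Icc _) (fun w => hG.mem_Icc _)
      exact this.integral_prod_left
    have h2 := integral_mono (hi1.sub (integrable_const (k * K))) hi2
      fun w => ih (y + ε • w.1) (x + ε • w.2)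
    simp only [Pi.sub_apply] at h2
    rw [integral_sub hi1 (integrable_const _)] at h2
    simp only [integral_const, probReal_univ, one_smul] at h2
    push_cast
    linarith

/-- A correlated Jensen inequality for `(u, v) ↦ u ^ α * v ^ β`, for tame functions. -/
lemma rpow_mul_rpow_integral_le_of_isTame {ν : Measure (E × E)} [IsGaussian ν]
    (hν : ∫ w, w ∂ν = 0) {α β c C M : ℝ} (hc : 0 < c) (hM : 0 ≤ M)
    (hQ : ∀ a b : E →L[ℝ] ℝ, 0 ≤ ∫ w, rpowHessian α β (a w.1) (b w.2) ∂ν)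
    {F G : E → ℝ} (hF : IsTame c C M F) (hG : IsTame c C M G) :
    (∫ w, F w.1 ∂ν) ^ α * (∫ w, G w.2 ∂ν) ^ β ≤ ∫ w, F w.1 ^ α * G w.2 ^ β ∂ν := by
  have hcC : c ≤ C := (hF.mem_Icc 0).1.trans (hF.mem_Icc 0).2
  obtain ⟨K, hK, hstep⟩ := exists_one_step ν hν hc hcC hM hQ
  have hN : ∀ N : ℕ, 0 < N → (∫ w, F w.1 ∂ν) ^ α * (∫ w, G w.2 ∂ν) ^ β
      ≤ (∫ w, F w.1 ^ α * G w.2 ^ β ∂ν) + K / N := by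
    intro N hN
    have hN' : (1 : ℝ) ≤ N := by exact_mod_cast hN
    have h := rpow_mul_rpow_average_le_add hν hc (K := K * (1 / (N : ℝ)) ^ 3) (ε := 1 / (N : ℝ))
      (fun F G hF hG y x => hstep F G hF hG _ (by positivity)
        ((div_le_one (by positivity)).2 hN') y x) hF hG (N ^ 2) 0 0
    have h1 : √(((N ^ 2 : ℕ) : ℝ) * (1 / (N : ℝ)) ^ 2) = 1 := by
      rw [Real.sqrt_eq_one]
      push_cast
      field_simp
    have h2 : ((N ^ 2 : ℕ) : ℝ) * (K * (1 / (N : ℝ)) ^ 3) = K / N := by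
      push_cast
      field_simp
    simp only [h1, h2, one_smul, zero_add] at h
    linarith
  have hlim : Tendsto (fun N : ℕ => (∫ w, F w.1 ^ α * G w.2 ^ β ∂ν) + K / N) atTop
      (𝓝 ((∫ w, F w.1 ^ α * G w.2 ^ β ∂ν) + 0)) :=
    tendsto_const_nhds.add (tendsto_const_div_atTop_nhds_zero_nat K)
  rw [add_zero] at hlim
  exact ge_of_tendsto hlim (eventually_atTop.2 ⟨1, fun N h => hN N h⟩)

/-- Measurable functions with values in `[c, C]` are almost everywhere limits of tame ones. -/
lemma exists_isTame_tendsto (μ : Measure E) [IsFiniteMeasure μ] {c C : ℝ} (hcC : c < C)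
    {F : E → ℝ} (hF : Measurable F) (hFb : ∀ y, F y ∈ Icc c C) :
    ∃ f : ℕ → E → ℝ, (∀ j, ∃ M, 0 ≤ M ∧ IsTame c C M (f j)) ∧
      ∀ᵐ y ∂μ, Tendsto (fun j => f j y) atTop (𝓝 (F y)) := by
  set d := (c + C) / 2 with hd
  set ρ := (C - c) / 2 with hρ
  have hρ0 : 0 < ρ := by simp only [hρ]; linarith
  set H : E → ℝ := fun y => arcsin ((F y - d) / ρ)
  have hHF : ∀ y, d + ρ * Real.sin (H y) = F y := fun y => by
    have h1 : -1 ≤ (F y - d) / ρ := by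
      rw [le_div_iff₀ hρ0]
      simp only [hd, hρ]
      linarith [(hFb y).1]
    have h2 : (F y - d) / ρ ≤ 1 := by
      rw [div_le_one hρ0]
      simp only [hd, hρ]
      linarith [(hFb y).2]
    rw [Real.sin_arcsin h1 h2]
    field_simp
    ring
  have hHm : Measurable H := Real.measurable_arcsin.comp ((hF.sub_const d).div_const ρ)
  have hH : MemLp H 1 μ := MemLp.of_bound hHm.aestronglyMeasurable (π / 2)
    (ae_of_all _ fun y => abs_le.2 ⟨Real.neg_pi_div_two_le_arcsin _, Real.arcsin_le_pi_div_two _⟩)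
  choose g hgc hg hgn using fun j : ℕ =>
    hH.exist_eLpNorm_sub_le ENNReal.one_ne_top le_rfl (ε := 1 / ((j : ℝ) + 1)) (by positivity)
  have hlim : Tendsto (fun j => eLpNorm (g j - H) 1 μ) atTop (𝓝 0) := by
    refine tendsto_of_tendsto_of_tendsto_of_le_of_le tendsto_const_nhds
      (h := fun j : ℕ => ENNReal.ofReal (1 / ((j : ℝ) + 1))) ?_ (fun j => zero_le) fun j => ?_
    · simpa using ENNReal.tendsto_ofReal tendsto_one_div_add_atTop_nhds_zero_nat
    · rw [eLpNorm_sub_comm]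
      exact hgn j
  obtain ⟨ns, -, hns⟩ := (tendstoInMeasure_of_tendsto_eLpNorm one_ne_zero
    (fun j => (hg j).continuous.aestronglyMeasurable) hHm.aestronglyMeasurable
    hlim).exists_seq_tendsto_ae
  refine ⟨fun j y => d + ρ * Real.sin (g (ns j) y), fun j => ?_, ?_⟩
  · refine exists_isTame_const_add ?_ ?_ fun y => ?_
    · exact contDiff_const.mul (Real.contDiff_sin.comp (contDiff_infty.1 (hg _) 2))
    · exact (hgc (ns j)).comp_left (g := fun u => ρ * Real.sin u) (by simp)
    · have h1 := Real.neg_one_le_sin (g (ns j) y)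
      have h2 := Real.sin_le_one (g (ns j) y)
      constructor <;> simp only [hd, hρ] at * <;> nlinarith
  · filter_upwards [hns] with y hy
    rw [← hHF y]
    exact (((Real.continuous_sin.tendsto _).comp hy).const_mul ρ).const_add d

lemma tendsto_integral_of_abs_le {Ω : Type*} [MeasurableSpace Ω] {μ : Measure Ω}
    [IsProbabilityMeasure μ] {f : ℕ → Ω → ℝ} {g : Ω → ℝ} {B : ℝ} (hf : ∀ j, Measurable (f j))
    (hb : ∀ j w, |f j w| ≤ B) (hlim : ∀ᵐ w ∂μ, Tendsto (fun j => f j w) atTop (𝓝 (g w))) :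
    Tendsto (fun j => ∫ w, f j w ∂μ) atTop (𝓝 (∫ w, g w ∂μ)) :=
  tendsto_integral_of_dominated_convergence (fun _ => B)
    (fun j => (hf j).aestronglyMeasurable) (integrable_const B)
    (fun j => ae_of_all _ fun w => hb j w) hlim

/-- A correlated Jensen inequality for `(u, v) ↦ u ^ α * v ^ β` under a centered Gaussian
measure whose covariance makes the Hessian of this function nonnegative on average. -/
theorem rpow_mul_rpow_integral_le {ν : Measure (E × E)} [IsGaussian ν]
    (hν : ∫ w, w ∂ν = 0) {α β c C : ℝ} (hc : 0 < c)
    (hQ : ∀ a b : E →L[ℝ] ℝ, 0 ≤ ∫ w, rpowHessian α β (a w.1) (b w.2) ∂ν)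
    {F G : E → ℝ} (hF : Measurable F) (hG : Measurable G)
    (hFb : ∀ y, F y ∈ Icc c C) (hGb : ∀ y, G y ∈ Icc c C) :
    (∫ w, F w.1 ∂ν) ^ α * (∫ w, G w.2 ∂ν) ^ β ≤ ∫ w, F w.1 ^ α * G w.2 ^ β ∂ν := by
  wlog hcC : c < C generalizing C
  · exact this (C := C + 1) (fun y => ⟨(hFb y).1, by linarith [(hFb y).2]⟩)
      (fun y => ⟨(hGb y).1, by linarith [(hGb y).2]⟩)
      (by linarith [(hFb 0).1.trans (hFb 0).2])
  obtain ⟨f, hf, hflim⟩ := exists_isTame_tendsto (ν.map Prod.fst) hcC hF hFb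
  obtain ⟨g, hg, hglim⟩ := exists_isTame_tendsto (ν.map Prod.snd) hcC hG hGb
  replace hflim := ae_of_ae_map measurable_fst.aemeasurable hflim
  replace hglim := ae_of_ae_map measurable_snd.aemeasurable hglim
  have hfb : ∀ j y, f j y ∈ Icc c C := fun j => (hf j).choose_spec.2.mem_Icc
  have hgb : ∀ j y, g j y ∈ Icc c C := fun j => (hg j).choose_spec.2.mem_Icc
  have hfm : ∀ j, Measurable (f j) := fun j => (hf j).choose_spec.2.continuous.measurable
  have hgm : ∀ j, Measurable (g j) := fun j => (hg j).choose_spec.2.continuous.measurable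
  have hj : ∀ j, (∫ w, f j w.1 ∂ν) ^ α * (∫ w, g j w.2 ∂ν) ^ β
      ≤ ∫ w, f j w.1 ^ α * g j w.2 ^ β ∂ν := fun j => by
    obtain ⟨M₁, hM₁, h₁⟩ := hf j
    obtain ⟨M₂, hM₂, h₂⟩ := hg j
    exact rpow_mul_rpow_integral_le_of_isTame hν hc (le_max_of_le_left hM₁) hQ
      (h₁.mono (le_max_left M₁ M₂)) (h₂.mono (le_max_right _ _))
  have habs : ∀ {u : ℝ}, u ∈ Icc c C → |u| ≤ C := fun hu => by
    rw [abs_of_pos (hc.trans_le hu.1)]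
    exact hu.2
  obtain ⟨K₁, hK₁, hb₁⟩ := exists_abs_rpow_le hc C α
  obtain ⟨K₂, hK₂, hb₂⟩ := exists_abs_rpow_le hc C β
  have hrpow : ∀ {u : ℕ → ℝ} {l : ℝ} (γ : ℝ), l ∈ Icc c C → Tendsto u atTop (𝓝 l) →
      Tendsto (fun j => u j ^ γ) atTop (𝓝 (l ^ γ)) := fun γ hl h =>
    h.rpow_const (Or.inl (hc.trans_le hl.1).ne')
  have l1 := tendsto_integral_of_abs_le (μ := ν) (fun j => (hfm j).comp measurable_fst)
    (fun j w => habs (hfb j w.1)) hflim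
  have l2 := tendsto_integral_of_abs_le (μ := ν) (fun j => (hgm j).comp measurable_snd)
    (fun j w => habs (hgb j w.2)) hglim
  have l3 : Tendsto (fun j => ∫ w, f j w.1 ^ α * g j w.2 ^ β ∂ν) atTop
      (𝓝 (∫ w, F w.1 ^ α * G w.2 ^ β ∂ν)) := by
    refine tendsto_integral_of_abs_le (B := K₁ * K₂) (fun j => ?_) (fun j w => ?_) ?_
    · exact (((hfm j).comp measurable_fst).pow_const α).mul
        (((hgm j).comp measurable_snd).pow_const β)
    · rw [abs_mul]
      exact mul_le_mul (hb₁ _ (hfb _ _)) (hb₂ _ (hgb _ _)) (abs_nonneg _) hK₁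
    · filter_upwards [hflim, hglim] with w h1 h2
      exact (hrpow α (hFb _) h1).mul (hrpow β (hGb _) h2)
  have m1 : ∫ w, F w.1 ∂ν ∈ Icc c C :=
    integral_mem_Icc_of_mem_Icc (hF.comp measurable_fst) fun w => hFb w.1
  have m2 : ∫ w, G w.2 ∂ν ∈ Icc c C :=
    integral_mem_Icc_of_mem_Icc (hG.comp measurable_snd) fun w => hGb w.2
  exact le_of_tendsto_of_tendsto' ((hrpow α m1 l1).mul (hrpow β m2 l2)) l3 hj

end Flow

section Correlated

variable {E : Type*} [NormedAddCommGroup E] [InnerProductSpace ℝ E] [FiniteDimensional ℝ E]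
  [MeasurableSpace E] [BorelSpace E]

/-- The linear map `(w, z) ↦ (σ w + τ z, σ w)`. -/
noncomputable def correlationMap (E : Type*) [NormedAddCommGroup E] [NormedSpace ℝ E] (σ τ : ℝ) :
    E × E →L[ℝ] E × E :=
  (σ • ContinuousLinearMap.fst ℝ E E + τ • ContinuousLinearMap.snd ℝ E E).prod
    (σ • ContinuousLinearMap.fst ℝ E E)

variable (E) in
/-- The law of `(σ W + τ Z, σ W)` for independent standard Gaussian vectors `W` and `Z`. -/
noncomputable def correlatedGaussian (σ τ : ℝ) : Measure (E × E) :=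
  ((stdGaussian E).prod (stdGaussian E)).map (correlationMap E σ τ)

instance isGaussian_correlatedGaussian (σ τ : ℝ) : IsGaussian (correlatedGaussian E σ τ) :=
  isGaussian_map _

lemma integral_correlatedGaussian {g : E × E → ℝ} (hg : Measurable g) (σ τ : ℝ) :
    ∫ w, g w ∂(correlatedGaussian E σ τ)
      = ∫ v, g (σ • v.1 + τ • v.2, σ • v.1) ∂((stdGaussian E).prod (stdGaussian E)) := by
  rw [correlatedGaussian, integral_map (by fun_prop) hg.aestronglyMeasurable]
  rfl

lemma integral_id_correlatedGaussian (σ τ : ℝ) :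
    ∫ w, w ∂(correlatedGaussian E σ τ) = 0 := by
  have hi : Integrable (fun v : E × E => v) ((stdGaussian E).prod (stdGaussian E)) :=
    IsGaussian.integrable_id
  have h0 : ∫ v, v ∂((stdGaussian E).prod (stdGaussian E)) = 0 := by
    refine Prod.ext ?_ ?_
    · rw [fst_integral hi, integral_fun_fst (fun w : E => w)]
      simp
    · rw [snd_integral hi, integral_fun_snd (fun w : E => w)]
      simp
  rw [correlatedGaussian, integral_map (by fun_prop) (by fun_prop),
    ContinuousLinearMap.integral_comp_comm _ hi, h0, map_zero]

lemma integral_rpowHessian_correlatedGaussian_nonneg {α β σ τ : ℝ} (hα : 0 < α * (α - 1))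
    (hστ : 0 < σ ^ 2 + τ ^ 2)
    (hrel : (α * β * σ ^ 2) ^ 2 = α * (α - 1) * (β * (β - 1)) * (σ ^ 2 * (σ ^ 2 + τ ^ 2)))
    (a b : E →L[ℝ] ℝ) :
    0 ≤ ∫ w, rpowHessian α β (a w.1) (b w.2) ∂(correlatedGaussian E σ τ) := by
  set μ := stdGaussian E
  have ha2 : MemLp a 2 μ := IsGaussian.memLp_dual μ a 2 (by simp)
  have hb2 : MemLp b 2 μ := IsGaussian.memLp_dual μ b 2 (by simp)
  have haa : Integrable (fun w => a w * a w) μ := ha2.integrable_mul ha2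
  have hab : Integrable (fun w => a w * b w) μ := ha2.integrable_mul hb2
  have hbb : Integrable (fun w => b w * b w) μ := hb2.integrable_mul hb2
  have hai : Integrable a μ := ha2.integrable one_le_two
  have hbi : Integrable b μ := hb2.integrable one_le_two
  have ha0 : ∫ w, a w ∂μ = 0 := integral_strongDual_stdGaussian a
  have hmeas : Measurable fun w : E × E => rpowHessian α β (a w.1) (b w.2) := by
    unfold rpowHessian
    fun_prop
  set A := α * (α - 1) / 2 with hA
  set D := β * (β - 1) / 2 with hD
  have hexp : ∀ v : E × E, rpowHessian α β (a (σ • v.1 + τ • v.2)) (b (σ • v.1))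
      = (A * σ ^ 2 * (a v.1 * a v.1) + α * β * σ ^ 2 * (a v.1 * b v.1)
          + D * σ ^ 2 * (b v.1 * b v.1))
        + 2 * A * σ * τ * (a v.1 * a v.2) + α * β * σ * τ * (b v.1 * a v.2)
        + A * τ ^ 2 * (a v.2 * a v.2) := fun v => by
    simp only [rpowHessian, map_add, map_smul, smul_eq_mul, hA, hD]
    ring
  have hi1 : Integrable (fun w => A * σ ^ 2 * (a w * a w) + α * β * σ ^ 2 * (a w * b w)
      + D * σ ^ 2 * (b w * b w)) μ := by fun_prop
  have j1 : Integrable (fun v : E × E => A * σ ^ 2 * (a v.1 * a v.1)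
      + α * β * σ ^ 2 * (a v.1 * b v.1) + D * σ ^ 2 * (b v.1 * b v.1)) (μ.prod μ) :=
    hi1.comp_fst μ
  have j2 : Integrable (fun v : E × E => a v.1 * a v.2) (μ.prod μ) := hai.mul_prod hai
  have j3 : Integrable (fun v : E × E => b v.1 * a v.2) (μ.prod μ) := hbi.mul_prod hai
  have j4 : Integrable (fun v : E × E => a v.2 * a v.2) (μ.prod μ) := haa.comp_snd μ
  have e1 := integral_fun_fst (μ := μ) (ν := μ) fun w => A * σ ^ 2 * (a w * a w)
    + α * β * σ ^ 2 * (a w * b w) + D * σ ^ 2 * (b w * b w)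
  have e4 := integral_fun_snd (μ := μ) (ν := μ) fun w => a w * a w
  have e2 := integral_prod_mul (μ := μ) (ν := μ) a a
  have e3 := integral_prod_mul (μ := μ) (ν := μ) b a
  simp only [probReal_univ, one_smul] at e1 e4
  rw [integral_correlatedGaussian hmeas]
  simp_rw [hexp]
  rw [integral_add (by fun_prop) (by fun_prop), integral_add (by fun_prop) (by fun_prop),
    integral_add (by fun_prop) (by fun_prop), e1, integral_const_mul, integral_const_mul,
    integral_const_mul, e2, e3, e4, ha0, ← integral_const_mul]
  simp only [mul_zero, add_zero]
  rw [← integral_add (by fun_prop) (by fun_prop)]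
  refine integral_nonneg fun w => ?_
  have hA0 : 0 < 4 * A * (σ ^ 2 + τ ^ 2) := by simp only [hA]; positivity
  have key : 4 * A * (σ ^ 2 + τ ^ 2) * (A * σ ^ 2 * (a w * a w) + α * β * σ ^ 2 * (a w * b w)
      + D * σ ^ 2 * (b w * b w) + A * τ ^ 2 * (a w * a w))
      = (2 * A * (σ ^ 2 + τ ^ 2) * a w + α * β * σ ^ 2 * b w) ^ 2 := by
    have : (α * β * σ ^ 2) ^ 2 = 4 * A * D * (σ ^ 2 * (σ ^ 2 + τ ^ 2)) := by
      rw [hrel, hA, hD]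
      ring
    linear_combination (- (b w) ^ 2) * this
  exact nonneg_of_mul_nonneg_right (key ▸ sq_nonneg _) hA0

end Correlated

section Heat

lemma withDensity_heatKernel_eq_map_stdGaussian (n : ℕ) {t : ℝ} (ht : 0 < t) :
    (volume : Measure (EuclideanSpace ℝ (Fin n))).withDensity (fun y => ENNReal.ofReal
        ((4 * π * t) ^ (-(n : ℝ) / 2) * Real.exp (-‖y‖ ^ 2 / (4 * t))))
      = (stdGaussian (EuclideanSpace ℝ (Fin n))).map (√(2 * t) • ·) := by
  set E := EuclideanSpace ℝ (Fin n)
  set κ : ℝ := (4 * π * t) ^ (-(n : ℝ) / 2) with hκ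
  have hκ0 : 0 ≤ κ := by positivity
  have hi : Integrable (fun y : E => κ * Real.exp (-‖y‖ ^ 2 / (4 * t))) := by
    have := (GaussianFourier.integrable_cexp_neg_mul_sq_norm_add (V := E)
      (b := ((1 / (4 * t) : ℝ) : ℂ)) (by simpa using ht) 0 0).norm
    refine (this.congr (ae_of_all _ fun y => ?_)).const_mul κ
    have e : -((1 / (4 * t) : ℝ) : ℂ) * ‖y‖ ^ 2 + 0 * (inner ℝ 0 y : ℝ)
        = ((-‖y‖ ^ 2 / (4 * t) : ℝ) : ℂ) := by
      push_cast
      ring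
    simp only [e, Complex.norm_exp, Complex.ofReal_re]
  have : IsFiniteMeasure ((volume : Measure E).withDensity (fun y => ENNReal.ofReal
        (κ * Real.exp (-‖y‖ ^ 2 / (4 * t))))) := isFiniteMeasure_withDensity_ofReal hi.2
  have : IsProbabilityMeasure ((stdGaussian E).map (√(2 * t) • ·)) :=
    Measure.isProbabilityMeasure_map (by fun_prop)
  refine Measure.ext_of_charFun (funext fun ξ => ?_)
  rw [charFun_map_smul, charFun_stdGaussian, charFun_apply,
    integral_withDensity_eq_integral_toReal_smul (by fun_prop) (by simp)]
  have h := GaussianFourier.integral_cexp_neg_mul_sq_norm_add (V := E)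
    (b := ((1 / (4 * t) : ℝ) : ℂ)) (by simpa using ht) Complex.I ξ
  have hκc : (κ : ℂ) * (π / ((1 / (4 * t) : ℝ) : ℂ)) ^ (Module.finrank ℝ E / 2 : ℂ) = 1 := by
    have e : (π / ((1 / (4 * t) : ℝ) : ℂ)) ^ (Module.finrank ℝ E / 2 : ℂ)
        = (((4 * π * t) ^ ((n : ℝ) / 2) : ℝ) : ℂ) := by
      rw [Complex.ofReal_cpow (by positivity), finrank_euclideanSpace, Fintype.card_fin]
      push_cast
      congr 1
      field_simp
    rw [e, ← Complex.ofReal_mul, hκ, ← rpow_add (by positivity), neg_div, neg_add_cancel,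
      rpow_zero, Complex.ofReal_one]
  have hint : ∀ y : E, (ENNReal.ofReal (κ * Real.exp (-‖y‖ ^ 2 / (4 * t)))).toReal
        • Complex.exp (inner ℝ y ξ * Complex.I)
      = κ * Complex.exp (-((1 / (4 * t) : ℝ) : ℂ) * ‖y‖ ^ 2
          + Complex.I * (inner ℝ ξ y : ℝ)) := fun y => by
    rw [ENNReal.toReal_ofReal (by positivity), Complex.real_smul, Complex.ofReal_mul,
      Complex.ofReal_exp, mul_assoc, ← Complex.exp_add, real_inner_comm]
    congr 2
    push_cast
    ring
  simp_rw [hint]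
  rw [integral_const_mul, h, ← mul_assoc, hκc, one_mul, norm_smul, Real.norm_eq_abs,
    abs_of_nonneg (sqrt_nonneg _)]
  congr 1
  rw [Complex.I_sq, Complex.ofReal_mul, mul_pow, ← Complex.ofReal_pow √(2 * t),
    sq_sqrt (by positivity)]
  push_cast
  have : (t : ℂ) ≠ 0 := by exact_mod_cast ht.ne'
  field_simp

lemma heat_eq_integral_stdGaussian (n : ℕ) {t : ℝ} (ht : 0 ≤ t)
    {f : EuclideanSpace ℝ (Fin n) → ℝ} (hf : Measurable f) (x : EuclideanSpace ℝ (Fin n)) :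
    heat n t f x = ∫ w, f (x + √(2 * t) • w) ∂(stdGaussian (EuclideanSpace ℝ (Fin n))) := by
  rcases ht.eq_or_lt with rfl | ht
  · simp [heat]
  have h1 : ∫ w, f (x + √(2 * t) • w) ∂(stdGaussian (EuclideanSpace ℝ (Fin n)))
      = ∫ u, f (x + u) ∂((stdGaussian (EuclideanSpace ℝ (Fin n))).map (√(2 * t) • ·)) := by
    rw [integral_map (by fun_prop) (Measurable.aestronglyMeasurable (by fun_prop))]
  rw [h1, ← withDensity_heatKernel_eq_map_stdGaussian n ht,
    integral_withDensity_eq_integral_toReal_smul (by fun_prop) (by simp), heat, if_neg ht.ne',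
    ← integral_const_mul, ← integral_add_left_eq_self _ x]
  refine integral_congr_ae (ae_of_all _ fun u => ?_)
  simp only
  rw [ENNReal.toReal_ofReal (by positivity), sub_add_cancel_left, norm_neg, smul_eq_mul]
  ring

end Heat

section ReverseHypercontractivity

lemma rpow_mem_Icc_of_mem_Icc {a b u : ℝ} (ha : 0 < a) (hu : u ∈ Icc a b) (q : ℝ) :
    u ^ q ∈ Icc (min (a ^ q) (b ^ q)) (max (a ^ q) (b ^ q)) := by
  have hu0 : 0 < u := ha.trans_le hu.1
  rcases le_total 0 q with hq | hq
  · exact ⟨(min_le_left _ _).trans (rpow_le_rpow ha.le hu.1 hq),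
      (rpow_le_rpow hu0.le hu.2 hq).trans (le_max_right _ _)⟩
  · exact ⟨(min_le_right _ _).trans (rpow_le_rpow_of_nonpos hu0 hu.2 hq),
      (rpow_le_rpow_of_nonpos ha hu.1 hq).trans (le_max_left _ _)⟩

lemma measurable_heat (n : ℕ) {t : ℝ} (ht : 0 ≤ t) {f : EuclideanSpace ℝ (Fin n) → ℝ}
    (hf : Measurable f) : Measurable (heat n t f) := by
  rw [funext fun x => heat_eq_integral_stdGaussian n ht hf x]
  refine (StronglyMeasurable.integral_prod_right'
    (f := fun p : EuclideanSpace ℝ (Fin n) × EuclideanSpace ℝ (Fin n) =>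
      f (p.1 + √(2 * t) • p.2)) ?_).measurable
  exact Measurable.stronglyMeasurable (by fun_prop)

lemma heat_mem_Icc (n : ℕ) {t a b : ℝ} (ht : 0 ≤ t) {f : EuclideanSpace ℝ (Fin n) → ℝ}
    (hf : Measurable f) (h : ∀ x, f x ∈ Icc a b) (x : EuclideanSpace ℝ (Fin n)) :
    heat n t f x ∈ Icc a b := by
  rw [heat_eq_integral_stdGaussian n ht hf]
  exact integral_mem_Icc_of_mem_Icc (by fun_prop) fun w => h _

lemma integral_fst_correlatedGaussian_eq_heat (n : ℕ) {s t : ℝ} (hs : 0 ≤ s) (hst : s ≤ t)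
    {g : EuclideanSpace ℝ (Fin n) → ℝ} (hg : Measurable g) {c C : ℝ}
    (hgb : ∀ y, g y ∈ Icc c C) (x : EuclideanSpace ℝ (Fin n)) :
    ∫ w, g (x + w.1) ∂(correlatedGaussian (EuclideanSpace ℝ (Fin n)) √(2 * s) √(2 * (t - s)))
      = heat n t g x := by
  have hB : ∀ v, |g (x + v)| ≤ max |c| |C| := fun v => abs_le_max_abs_abs (hgb _).1 (hgb _).2
  have h0 : ∫ w, w ∂(stdGaussian (EuclideanSpace ℝ (Fin n))) = 0 := by simp
  rw [integral_correlatedGaussian (by fun_prop), integral_prod _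
    (integrable_of_mem_Icc (by fun_prop) fun v => hgb _),
    integral_integral_smul_add_smul h0 (H := fun v => g (x + v)) (by fun_prop) hB,
    heat_eq_integral_stdGaussian n (hs.trans hst) hg, sq_sqrt (by linarith),
    sq_sqrt (by linarith)]
  ring_nf

lemma integral_snd_correlatedGaussian_eq_heat (n : ℕ) {s : ℝ} (hs : 0 ≤ s) (τ : ℝ)
    {g : EuclideanSpace ℝ (Fin n) → ℝ} (hg : Measurable g) (x : EuclideanSpace ℝ (Fin n)) :
    ∫ w, g (x + w.2) ∂(correlatedGaussian (EuclideanSpace ℝ (Fin n)) √(2 * s) τ)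
      = heat n s g x := by
  rw [integral_correlatedGaussian (by fun_prop), heat_eq_integral_stdGaussian n hs hg,
    integral_fun_fst (fun w => g (x + √(2 * s) • w))]
  simp

lemma integral_mul_correlatedGaussian_eq_heat (n : ℕ) {s t : ℝ} (hs : 0 ≤ s) (hst : s ≤ t)
    {f g : EuclideanSpace ℝ (Fin n) → ℝ} (hf : Measurable f) (hg : Measurable g)
    {c C c' C' : ℝ} (hfb : ∀ y, f y ∈ Icc c C) (hgb : ∀ y, g y ∈ Icc c' C')
    (x : EuclideanSpace ℝ (Fin n)) :
    ∫ w, f (x + w.1) * g (x + w.2)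
        ∂(correlatedGaussian (EuclideanSpace ℝ (Fin n)) √(2 * s) √(2 * (t - s)))
      = heat n s (fun y => heat n (t - s) f y * g y) x := by
  have hts : 0 ≤ t - s := sub_nonneg.2 hst
  have hh := measurable_heat n hts hf
  have hint : Integrable (fun v : EuclideanSpace ℝ (Fin n) × EuclideanSpace ℝ (Fin n) =>
      f (x + (√(2 * s) • v.1 + √(2 * (t - s)) • v.2)) * g (x + √(2 * s) • v.1))
      ((stdGaussian (EuclideanSpace ℝ (Fin n))).prod (stdGaussian _)) := by
    refine (integrable_of_mem_Icc (by fun_prop) fun v => hgb _).bdd_mul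
      (c := max |c| |C|) (Measurable.aestronglyMeasurable (by fun_prop)) (ae_of_all _ fun v => ?_)
    exact abs_le_max_abs_abs (hfb _).1 (hfb _).2
  rw [integral_correlatedGaussian (by fun_prop), integral_prod _ hint,
    heat_eq_integral_stdGaussian n hs (by fun_prop)]
  refine integral_congr_ae (ae_of_all _ fun w => ?_)
  simp only
  rw [integral_mul_const, heat_eq_integral_stdGaussian n hts hf]
  simp_rw [add_assoc]

end ReverseHypercontractivity

theorem local_reverse_hypercontractivity_heat (n : ℕ) (hn : 1 ≤ n)
    (s t : ℝ) (hs : 0 < s) (hst : s ≤ t)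
    (q₁ q₂ : ℝ) (hq : q₂ ≤ q₁)
    (hq' : (0 < q₂ ∧ q₁ < 1) ∨ q₁ < 0)
    (hrel : (q₂ - 1) / (q₁ - 1) = t / s)
    (f : EuclideanSpace ℝ (Fin n) → ℝ) (hf : Measurable f)
    (a b : ℝ) (ha : 0 < a) (hab : ∀ x, a ≤ f x ∧ f x ≤ b)
    (x : EuclideanSpace ℝ (Fin n)) :
    (heat n t (fun y => f y ^ q₁) x) ^ (1 / q₁) ≤
      (heat n s (fun y => heat n (t - s) f y ^ q₂) x) ^ (1 / q₂) := by
  have hq₁ : q₁ ≠ 0 := by rcases hq' with h | h <;> intro h0 <;> linarith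
  have hq₂ : q₂ ≠ 0 := by rcases hq' with h | h <;> intro h0 <;> linarith
  have hq₁1 : q₁ < 1 := by rcases hq' with h | h <;> linarith
  have hb : 0 < b := ha.trans_le ((hab x).1.trans (hab x).2)
  have hts : 0 ≤ t - s := sub_nonneg.2 hst
  have ht : 0 < t := hs.trans_le hst
  have hrel' : (q₂ - 1) * s = t * (q₁ - 1) :=
    (div_eq_div_iff (by linarith) hs.ne').1 hrel
  set h := heat n (t - s) f with hh
  have hhm : Measurable h := measurable_heat n hts hf
  have hhb : ∀ y, h y ∈ Icc a b := heat_mem_Icc n hts hf hab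
  have hfq := fun y => rpow_mem_Icc_of_mem_Icc ha (hab y) q₁
  have hhq := fun y => rpow_mem_Icc_of_mem_Icc ha (hhb y) q₂
  set c := min (min (a ^ q₁) (b ^ q₁)) (min (a ^ q₂) (b ^ q₂))
  set C := max (max (a ^ q₁) (b ^ q₁)) (max (a ^ q₂) (b ^ q₂))
  have hc : 0 < c := lt_min (lt_min (by positivity) (by positivity))
    (lt_min (by positivity) (by positivity))
  have hfc : ∀ y, f y ^ q₁ ∈ Icc c C := fun y =>
    ⟨(min_le_left _ _).trans (hfq y).1, (hfq y).2.trans (le_max_left _ _)⟩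
  have hhc : ∀ y, h y ^ q₂ ∈ Icc c C := fun y =>
    ⟨(min_le_right _ _).trans (hhq y).1, (hhq y).2.trans (le_max_right _ _)⟩
  have hσ : √(2 * s) ^ 2 = 2 * s := sq_sqrt (by linarith)
  have hτ : √(2 * (t - s)) ^ 2 = 2 * (t - s) := sq_sqrt (by linarith)
  have hα : 0 < 1 / q₁ * (1 / q₁ - 1) := by
    have : 1 / q₁ * (1 / q₁ - 1) = (1 - q₁) / q₁ ^ 2 := by field_simp
    rw [this]
    exact div_pos (by linarith) (by positivity)
  have hQ := integral_rpowHessian_correlatedGaussian_nonneg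
    (E := EuclideanSpace ℝ (Fin n)) (α := 1 / q₁) (β := 1 - 1 / q₂)
    (σ := √(2 * s)) (τ := √(2 * (t - s))) hα (by rw [hσ, hτ]; linarith) (by
      rw [hσ, hτ]
      field_simp
      linear_combination (q₂ - 1) * hrel')
  have hmain := rpow_mul_rpow_integral_le (integral_id_correlatedGaussian _ _) hc hQ
    (F := fun y => f (x + y) ^ q₁) (G := fun y => h (x + y) ^ q₂) (by fun_prop) (by fun_prop)
    (fun y => hfc (x + y)) (fun y => hhc (x + y))
  have hpow : ∀ w : EuclideanSpace ℝ (Fin n) × EuclideanSpace ℝ (Fin n),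
      (f (x + w.1) ^ q₁) ^ (1 / q₁) * (h (x + w.2) ^ q₂) ^ (1 - 1 / q₂)
        = f (x + w.1) * h (x + w.2) ^ (q₂ - 1) := fun w => by
    rw [← rpow_mul (ha.le.trans (hab _).1), ← rpow_mul (ha.le.trans (hhb _).1),
      mul_one_div_cancel hq₁, rpow_one, mul_sub, mul_one_div_cancel hq₂, mul_one]
  have hmul : ∀ y, h y * h y ^ (q₂ - 1) = h y ^ q₂ := fun y => by
    have hy : 0 < h y := ha.trans_le (hhb y).1
    rw [rpow_sub_one hy.ne', mul_div_cancel₀ _ hy.ne']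
  simp_rw [hpow] at hmain
  rw [integral_fst_correlatedGaussian_eq_heat n hs.le hst (g := fun y => f y ^ q₁)
      (by fun_prop) hfc,
    integral_snd_correlatedGaussian_eq_heat n hs.le _ (g := fun y => h y ^ q₂) (by fun_prop),
    integral_mul_correlatedGaussian_eq_heat n hs.le hst hf (g := fun y => h y ^ (q₂ - 1))
      (by fun_prop) hab (fun y => rpow_mem_Icc_of_mem_Icc ha (hhb y) (q₂ - 1)), ← hh] at hmain
  simp_rw [hmul] at hmain
  have hB : 0 < heat n s (fun y => h y ^ q₂) x :=
    hc.trans_le (heat_mem_Icc n hs.le (by fun_prop) hhc x).1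
  rw [rpow_sub hB, rpow_one, ← mul_div_assoc, div_le_iff₀ (by positivity), mul_comm] at hmain
  exact le_of_mul_le_mul_left hmain hB
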